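/- (Separation of the two tests.) Let n ≥ 1, let Σ be a positive definite symmetric real n×n matrix, and let l_i, l_m, w ∈ ℝⁿ satisfy: (i) (l_m+w)ᵀΣ⁻¹(l_m+w) ≤ (l_i+w)ᵀΣ⁻¹(l_i+w); (ii) l_m ≠ l_i; and (iii) (l_m − l_i)ᵀΣ⁻¹w ≥ 0. Then the classical test with threshold τ'_LB = (1/8)(l_i+w)ᵀΣ⁻¹(l_i+w) accepts the attacker, (1/8)(l_m+w)ᵀΣ⁻¹(l_m+w) ≤ τ'_LB, while the environment-estimation test with threshold τ_LB = (1/8)wᵀΣ⁻¹w rejects it, (1/8)(l_m + w − l_i)ᵀΣ⁻¹(l_m + w − l_i) > τ_LB. Hence there are cyber-physical emulation attacks undetectable by classical fingerprinting that are detected by environment estimation. -/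

import Mathlib

open Matrix

/-- Separation of the two tests: under (i) `(l_m+w)ᵀΣ⁻¹(l_m+w) ≤
(l_i+w)ᵀΣ⁻¹(l_i+w)`, (ii) `l_m ≠ l_i`, and (iii) `(l_m−l_i)ᵀΣ⁻¹w ≥ 0`,
the classical test with threshold `τ'_LB = (1/8)(l_i+w)ᵀΣ⁻¹(l_i+w)` accepts
the attacker, while the environment-estimation test with threshold
`τ_LB = (1/8)wᵀΣ⁻¹w` rejects it. -/
theorem classical_accepts_env_rejects {n : ℕ} (hn : 1 ≤ n)
    (S : Matrix (Fin n) (Fin n) ℝ) (hS : S.PosDef)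
    (li lm w : Fin n → ℝ)
    (hatt : (lm + w) ⬝ᵥ (S⁻¹ *ᵥ (lm + w)) ≤ (li + w) ⬝ᵥ (S⁻¹ *ᵥ (li + w)))
    (hne : lm ≠ li)
    (hlw : 0 ≤ (lm - li) ⬝ᵥ (S⁻¹ *ᵥ w)) :
    (1/8) * ((lm + w) ⬝ᵥ (S⁻¹ *ᵥ (lm + w)))
        ≤ (1/8) * ((li + w) ⬝ᵥ (S⁻¹ *ᵥ (li + w))) ∧
      (1/8) * ((lm + w - li) ⬝ᵥ (S⁻¹ *ᵥ (lm + w - li)))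
        > (1/8) * (w ⬝ᵥ (S⁻¹ *ᵥ w)) := by
  refine ⟨by linarith, ?_⟩
  have hP := hS.inv
  have hT : (S⁻¹)ᵀ = S⁻¹ := by
    have h := hP.isHermitian.eq
    rwa [conjTranspose_eq_transpose_of_trivial] at h
  have hpos : 0 < (lm - li) ⬝ᵥ (S⁻¹ *ᵥ (lm - li)) := by
    have h := hP.dotProduct_mulVec_pos (sub_ne_zero.mpr hne)
    simpa only [star_trivial] using h
  have hsym : w ⬝ᵥ (S⁻¹ *ᵥ (lm - li)) = (lm - li) ⬝ᵥ (S⁻¹ *ᵥ w) := by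
    rw [dotProduct_mulVec, ← mulVec_transpose, hT, dotProduct_comm]
  have he : lm + w - li = (lm - li) + w := by abel
  rw [he, mulVec_add, add_dotProduct, dotProduct_add, dotProduct_add, hsym]
  linarith
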